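/- Let G be a simple graph on Fin N. The following are equivalent: (i) there exist a real number K > 0, intrinsic frequencies ω : Fin N → ℝ, and θ : Fin N → ℝ such that θ is a completely degenerate equilibrium of the non-identical Kuramoto system with coupling K and frequencies ω; (ii) G is bipartite (there is c : Fin N → Fin 2 with adjacent vertices receiving distinct colors). -/

import Mathlib

open Real

open Classical in
/-- Adjacency indicator: `1` if `j` and `k` are adjacent in `G`, `0` otherwise. -/
noncomputable def adjInd {V : Type*} (G : SimpleGraph V) (j k : V) : ℝ :=
  if G.Adj j k then 1 else 0

/-- A completely degenerate equilibrium of the identical Kuramoto system on `G`. -/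
def IsCDE {V : Type*} [Fintype V] (G : SimpleGraph V) (θ : V → ℝ) : Prop :=
  (∀ k, ∑ j, adjInd G j k * Real.sin (θ j - θ k) = 0) ∧
  (∀ j k, G.Adj j k → Real.cos (θ j - θ k) = 0)

/-- A completely degenerate equilibrium of the non-identical Kuramoto system with coupling
`K` and intrinsic frequencies `ω`. -/
def IsCDENonId {N : ℕ} (G : SimpleGraph (Fin N)) (K : ℝ) (ω θ : Fin N → ℝ) : Prop :=
  (∀ k, ω k + K * ∑ j, adjInd G j k * Real.sin (θ j - θ k) = 0) ∧
  (∀ j k, G.Adj j k → Real.cos (θ j - θ k) = 0)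

/-- the non-identical Kuramoto system on `G` supports a completely degenerate
equilibrium for some coupling `K > 0` and some intrinsic frequencies iff `G` is
bipartite. -/
theorem stmt15 {N : ℕ} (G : SimpleGraph (Fin N)) :
    (∃ (K : ℝ) (_ : 0 < K) (ω θ : Fin N → ℝ), IsCDENonId G K ω θ) ↔
      ∃ c : Fin N → Fin 2, ∀ j k : Fin N, G.Adj j k → c j ≠ c k := by
  classical
  constructor
  · rintro ⟨K, hK, ω, θ, -, h⟩
    refine ⟨fun v => if 0 < sin (2 * θ v) ∨ (sin (2 * θ v) = 0 ∧ 0 < cos (2 * θ v)) then 0 else 1, ?_⟩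
    intro j k hjk
    have hc := h j k hjk
    have e : 2 * θ j = 2 * θ k + 2 * (θ j - θ k) := by ring
    have h1 : cos (2 * (θ j - θ k)) = -1 := by rw [cos_two_mul, hc]; norm_num
    have h2 : sin (2 * (θ j - θ k)) = 0 := by rw [sin_two_mul, hc]; simp
    have hs : sin (2 * θ j) = - sin (2 * θ k) := by rw [e, sin_add, h1, h2]; ring
    have hcos : cos (2 * θ j) = - cos (2 * θ k) := by rw [e, cos_add, h1, h2]; ring
    have hq := sin_sq_add_cos_sq (2 * θ k)
    simp only [hs, hcos]
    generalize sin (2 * θ k) = y at *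
    generalize cos (2 * θ k) = x at *
    rcases lt_trichotomy y 0 with hy | hy | hy
    · simp [hy, hy.le, hy.ne, not_lt.mpr hy.le]
    · subst hy
      have hx : x ≠ 0 := by rintro rfl; norm_num at hq
      rcases lt_or_gt_of_ne hx with hx | hx
      · simp [hx, not_lt.mpr hx.le]
      · simp [hx, not_lt.mpr hx.le]
    · simp [hy, hy.le, hy.ne', not_lt.mpr hy.le]
  · rintro ⟨c, hc⟩
    refine ⟨1, one_pos, fun k => -(1 * ∑ j, adjInd G j k *
      sin ((if c j = 0 then 0 else π / 2) - (if c k = 0 then 0 else π / 2))),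
      fun v => if c v = 0 then 0 else π / 2, fun k => ?_, fun j k hjk => ?_⟩
    · exact neg_add_cancel _
    · have := hc j k hjk
      by_cases hj : c j = 0 <;> by_cases hk : c k = 0
      · exact absurd (hj.trans hk.symm) this
      · simp [hj, hk]
      · simp [hj, hk]
      · exfalso; omega
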